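/- arXiv:2306.08932 — 17 statements merged into one kernel-verified Lean document; each statement's English description precedes it below -/
import Mathlib

section
/- reg(T) is a regular subsemigroup of T_{E*}(X): (i) for all α, β ∈ reg(T), the composite αβ (the map x ↦ β(α(x))) again belongs to reg(T); and (ii) for every α ∈ reg(T) there exists β ∈ reg(T) such that αβα = α (i.e., α(β(α(x))) = α(x) for all x ∈ X). -/
universe u

/-- The semigroup `T_{E*}(X)` of maps preserving `E` in both directions. -/
def TEstar {X : Type u} (E : Setoid X) : Set (X → X) :=
  {α | ∀ x y : X, E.r x y ↔ E.r (α x) (α y)}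

/-- The `E`-class of `x`. -/
def cls {X : Type u} (E : Setoid X) (x : X) : Set X := {y | E.r x y}

/-- The regular part `reg(T)` of `T_{E*}(X)`: every `E`-class meets the range. -/
def regT {X : Type u} (E : Setoid X) : Set (X → X) :=
  {α | α ∈ TEstar E ∧ ∀ x : X, (cls E x ∩ Set.range α).Nonempty}

/-- `reg(T)` is a regular subsemigroup of `T_{E*}(X)`. -/
theorem stmt0 {X : Type u} [Nonempty X] (E : Setoid X) :
    (∀ α β : X → X, α ∈ regT E → β ∈ regT E → β ∘ α ∈ regT E) ∧
    (∀ α : X → X, α ∈ regT E → ∃ β ∈ regT E, ∀ x : X, α (β (α x)) = α x) := by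
  constructor
  · rintro α β ⟨hα, hαr⟩ ⟨hβ, hβr⟩
    refine ⟨fun x y => (hα x y).trans (hβ _ _), fun x => ?_⟩
    obtain ⟨_, hx, y, rfl⟩ := hβr x
    obtain ⟨_, hy, z, rfl⟩ := hαr y
    exact ⟨β (α z), E.iseqv.trans hx ((hβ _ _).1 hy), z, rfl⟩
  · rintro α ⟨hα, hαr⟩
    have key : ∀ y, ∃ z, E.r y (α z) ∧ (y ∈ Set.range α → α z = y) := by
      intro y
      by_cases h : y ∈ Set.range α
      · obtain ⟨z, rfl⟩ := h
        exact ⟨z, E.iseqv.refl _, fun _ => rfl⟩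
      · obtain ⟨_, hy, z, rfl⟩ := hαr y
        exact ⟨z, hy, fun hr => absurd hr h⟩
    choose g hg hgr using key
    refine ⟨g, ⟨fun x y => ?_, fun x => ?_⟩, fun x => hgr _ ⟨x, rfl⟩⟩
    · rw [hα (g x) (g y)]
      exact ⟨fun h => E.iseqv.trans (E.iseqv.symm (hg x)) (E.iseqv.trans h (hg y)),
        fun h => E.iseqv.trans (hg x) (E.iseqv.trans h (E.iseqv.symm (hg y)))⟩
    · exact ⟨g (α x), (hα _ _).2 (hg (α x)), α x, rfl⟩
end

section
/- reg(T) is the largest regular subsemigroup of T_{E*}(X): if U is a subsemigroup of T_{E*}(X) such that every α ∈ U is regular in U (i.e., there exists β ∈ U with αβα = α), then U ⊆ reg(T). -/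
universe u

/-- `reg(T)` is the largest regular subsemigroup of `T_{E*}(X)`. -/
theorem stmt1 {X : Type u} [Nonempty X] (E : Setoid X) (U : Set (X → X))
    (hUsub : U ⊆ TEstar E)
    (hUclosed : ∀ α ∈ U, ∀ β ∈ U, β ∘ α ∈ U)
    (hUreg : ∀ α ∈ U, ∃ β ∈ U, ∀ x : X, α (β (α x)) = α x) :
    U ⊆ regT E := by
  intro α hα
  obtain ⟨β, hβ, h⟩ := hUreg α hα
  refine ⟨hUsub hα, fun x => ⟨α (β x), ?_, β x, rfl⟩⟩
  have h1 : E.r (β (α (β x))) (β x) := by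
    rw [hUsub hα, h]
  exact E.symm ((hUsub hβ _ _).mpr h1)
end

section
/- For α, β ∈ reg(T), the following are equivalent: (1) there exist γ, δ ∈ reg(T) with γα = β and δβ = α (i.e., β(x) = α(γ(x)) and α(x) = β(δ(x)) for all x ∈ X); (2) Xα = Xβ (α and β have the same range). In other words, α and β are Green's L-related in the semigroup reg(T) if and only if their ranges coincide. -/
universe u

/-- If `range β ⊆ range α` then `β` factors through `α` within `reg(T)`. -/
theorem regT_factor {X : Type u} (E : Setoid X) (α β : X → X)
    (hα : α ∈ regT E) (hβ : β ∈ regT E) (h : Set.range β ⊆ Set.range α) :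
    ∃ γ ∈ regT E, α ∘ γ = β := by
  have h1 : ∀ x, ∃ y, α y = β x := fun x => h ⟨x, rfl⟩
  choose γ hγ using h1
  refine ⟨γ, ⟨fun x y => ?_, fun x => ?_⟩, funext hγ⟩
  · rw [hβ.1 x y, hα.1 (γ x) (γ y), hγ, hγ]
  · obtain ⟨_, hz, y, rfl⟩ := hβ.2 (α x)
    refine ⟨γ y, ?_, y, rfl⟩
    change E.r x (γ y)
    rw [hα.1, hγ]
    exact hz

/-- Green's `L`-relation on `reg(T)`: `α L β` iff `Xα = Xβ`. -/
theorem stmt2 {X : Type u} [Nonempty X] (E : Setoid X) (α β : X → X)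
    (hα : α ∈ regT E) (hβ : β ∈ regT E) :
    (∃ γ ∈ regT E, ∃ δ ∈ regT E, α ∘ γ = β ∧ β ∘ δ = α) ↔
      Set.range α = Set.range β := by
  constructor
  · rintro ⟨γ, -, δ, -, h1, h2⟩
    apply Set.Subset.antisymm
    · rw [← h2]; exact Set.range_comp_subset_range δ β
    · rw [← h1]; exact Set.range_comp_subset_range γ α
  · intro h
    obtain ⟨γ, hγ, h1⟩ := regT_factor E α β hα hβ h.ge
    obtain ⟨δ, hδ, h2⟩ := regT_factor E β α hβ hα h.le
    exact ⟨γ, hγ, δ, hδ, h1, h2⟩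
end

section
/- For α, β ∈ reg(T), the following are equivalent: (1) α and β are Green's D-related in reg(T), i.e., there exists γ ∈ reg(T) such that Xα = Xγ and ker(γ) = ker(β); (2) there exists δ ∈ reg(T) such that the restriction of δ to Xα is a bijection from Xα onto Xβ; (3) there exists δ ∈ T_{E*}(X) such that the restriction of δ to Xα is a bijection from Xα onto Xβ. -/
universe u

/-- Green's `D`-relation on `reg(T)`. -/
theorem stmt5 {X : Type u} [Nonempty X] (E : Setoid X) (α β : X → X)
    (hα : α ∈ regT E) (hβ : β ∈ regT E) :
    List.TFAE
      [ ∃ γ ∈ regT E, Set.range α = Set.range γ ∧ ∀ x y : X, γ x = γ y ↔ β x = β y,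
        ∃ δ ∈ regT E, Set.BijOn δ (Set.range α) (Set.range β),
        ∃ δ ∈ TEstar E, Set.BijOn δ (Set.range α) (Set.range β) ] := by
  tfae_have 1 → 2 := by
    rintro ⟨γ, ⟨hγ, hγr⟩, hr, hk⟩
    have hw : ∀ z : X, ∃ x : X, E.r z (γ x) ∧ (z ∈ Set.range γ → γ x = z) := by
      intro z
      by_cases hz : z ∈ Set.range γ
      · obtain ⟨x, rfl⟩ := hz
        exact ⟨x, E.refl _, fun _ => rfl⟩
      · obtain ⟨_, h1, x, rfl⟩ := hγr z
        exact ⟨x, h1, fun h => absurd h hz⟩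
    choose w hw1 hw2 using hw
    have key : ∀ x, β (w (γ x)) = β x := fun x => (hk _ _).1 (hw2 _ ⟨x, rfl⟩)
    refine ⟨fun z => β (w z), ⟨?_, ?_⟩, ?_, ?_, ?_⟩
    · intro x y
      rw [← hβ.1 (w x) (w y), hγ (w x) (w y)]
      exact ⟨fun h => E.trans (E.symm (hw1 x)) (E.trans h (hw1 y)),
        fun h => E.trans (hw1 x) (E.trans h (E.symm (hw1 y)))⟩
    · intro y
      obtain ⟨_, h1, x, rfl⟩ := hβ.2 y
      exact ⟨β x, h1, γ x, key x⟩
    · intro z _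
      exact ⟨w z, rfl⟩
    · rw [hr]
      rintro _ ⟨x, rfl⟩ _ ⟨y, rfl⟩ h
      simp only [key] at h
      exact (hk _ _).2 h
    · rw [hr]
      rintro _ ⟨x, rfl⟩
      exact ⟨γ x, ⟨x, rfl⟩, key x⟩
  tfae_have 2 → 3 := by
    rintro ⟨δ, h, hb⟩
    exact ⟨δ, h.1, hb⟩
  tfae_have 3 → 1 := by
    rintro ⟨δ, hδ, hm, hi, hs⟩
    have hg : ∀ x : X, ∃ z ∈ Set.range α, δ z = β x := fun x => hs ⟨x, rfl⟩
    choose γ hγ1 hγ2 using hg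
    have hr : Set.range α = Set.range γ := by
      ext z
      constructor
      · intro hz
        obtain ⟨x, hx⟩ := hm hz
        exact ⟨x, hi (hγ1 x) hz ((hγ2 x).trans hx)⟩
      · rintro ⟨x, rfl⟩
        exact hγ1 x
    refine ⟨γ, ⟨?_, ?_⟩, hr, ?_⟩
    · intro x y
      rw [hδ (γ x) (γ y), hγ2, hγ2]
      exact hβ.1 x y
    · rw [← hr]
      exact hα.2
    · intro x y
      rw [← hγ2 x, ← hγ2 y]
      exact ⟨fun h => congrArg δ h, fun h => hi (hγ1 x) (hγ1 y) h⟩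
  tfae_finish
end

section
/- For α, β ∈ reg(T), the following are equivalent: (1) α and β are Green's J-related in reg(T), i.e., there exist λ, μ, λ', μ' ∈ reg(T) such that λαμ = β and λ'βμ' = α (as functions, β = μ ∘ α ∘ λ and α = μ' ∘ β ∘ λ'); (2) the cardinality of Xα equals the cardinality of Xβ, and there exist ρ, τ ∈ reg(T) such that for every E-class A ∈ X/E there exist E-classes B, C ∈ X/E with Aα ⊆ (Bβ)ρ and Aβ ⊆ (Cα)τ (i.e., α(A) ⊆ ρ(β(B)) and β(A) ⊆ τ(α(C))). -/
universe u

/-- The `E`-class indexed by an element of the quotient `X/E`. -/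
def clsQ {X : Type u} (E : Setoid X) (A : Quotient E) : Set X :=
  {x | Quotient.mk E x = A}

theorem exists_left_aux {X : Type u} (E : Setoid X) (α β τ : X → X)
    (hα : α ∈ regT E) (hβ : β ∈ regT E) (hτ : τ ∈ regT E)
    (h : ∀ x, ∃ z, τ (α z) = β x) : ∃ l ∈ regT E, τ ∘ α ∘ l = β := by
  choose l hl using h
  refine ⟨l, ⟨?_, ?_⟩, funext hl⟩
  · intro x y
    rw [hβ.1 x y, ← hl x, ← hl y, ← hτ.1, ← hα.1]
  · intro x
    obtain ⟨_, hy, y, rfl⟩ := hβ.2 (τ (α x))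
    refine ⟨l y, ?_, y, rfl⟩
    have hy' : E.r (τ (α x)) (β y) := hy
    rw [← hl y, ← hτ.1, ← hα.1] at hy'
    exact hy'

theorem image_sub_aux {X : Type u} (E : Setoid X) (α β l m : X → X)
    (hl : l ∈ regT E) (h : m ∘ α ∘ l = β) (A : Quotient E) :
    ∃ C : Quotient E, β '' clsQ E A ⊆ m '' (α '' clsQ E C) := by
  induction A using Quotient.inductionOn with
  | h a =>
    refine ⟨Quotient.mk E (l a), ?_⟩
    rintro _ ⟨x, hx, rfl⟩
    refine ⟨α (l x), ⟨l x, ?_, rfl⟩, congrFun h x⟩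
    have hx' : E.r x a := Quotient.exact hx
    exact Quotient.sound ((hl.1 x a).1 hx')

theorem card_aux {X : Type u} (α β l m : X → X) (h : m ∘ α ∘ l = β) :
    Cardinal.mk ↥(Set.range β) ≤ Cardinal.mk ↥(Set.range α) := by
  have hs : Set.range β ⊆ m '' Set.range α := by
    rintro _ ⟨x, rfl⟩
    exact ⟨α (l x), ⟨l x, rfl⟩, congrFun h x⟩
  exact (Cardinal.mk_le_mk_of_subset hs).trans Cardinal.mk_image_le

/-- Green's `J`-relation on `reg(T)`. -/
theorem stmt6 {X : Type u} [Nonempty X] (E : Setoid X) (α β : X → X)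
    (hα : α ∈ regT E) (hβ : β ∈ regT E) :
    ((∃ l ∈ regT E, ∃ m ∈ regT E, m ∘ α ∘ l = β) ∧
     (∃ l' ∈ regT E, ∃ m' ∈ regT E, m' ∘ β ∘ l' = α)) ↔
      (Cardinal.mk ↥(Set.range α) = Cardinal.mk ↥(Set.range β) ∧
       ∃ ρ ∈ regT E, ∃ τ ∈ regT E, ∀ A : Quotient E, ∃ B C : Quotient E,
         α '' clsQ E A ⊆ ρ '' (β '' clsQ E B) ∧
         β '' clsQ E A ⊆ τ '' (α '' clsQ E C)) := by
  constructor
  · rintro ⟨⟨l, hl, m, hm, h⟩, l', hl', m', hm', h'⟩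
    refine ⟨le_antisymm (card_aux _ _ _ _ h') (card_aux _ _ _ _ h), m', hm', m, hm, fun A => ?_⟩
    obtain ⟨B, hB⟩ := image_sub_aux E _ _ _ _ hl' h' A
    obtain ⟨C, hC⟩ := image_sub_aux E _ _ _ _ hl h A
    exact ⟨B, C, hB, hC⟩
  · rintro ⟨-, ρ, hρ, τ, hτ, H⟩
    constructor
    · obtain ⟨l, hl, h⟩ := exists_left_aux E α β τ hα hβ hτ (fun x => by
        obtain ⟨B, C, -, hC⟩ := H (Quotient.mk E x)
        obtain ⟨_, ⟨z, -, rfl⟩, hz⟩ := hC ⟨x, rfl, rfl⟩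
        exact ⟨z, hz⟩)
      exact ⟨l, hl, τ, hτ, h⟩
    · obtain ⟨l, hl, h⟩ := exists_left_aux E β α ρ hβ hα hρ (fun x => by
        obtain ⟨B, C, hB, -⟩ := H (Quotient.mk E x)
        obtain ⟨_, ⟨z, -, rfl⟩, hz⟩ := hB ⟨x, rfl, rfl⟩
        exact ⟨z, hz⟩)
      exact ⟨l, hl, ρ, hρ, h⟩
end

section
/- For α, β ∈ reg(T), the following are equivalent: (1) there exists a bijection ρ from the set X/E of E-classes onto itself such that |Aα| ≤ |(ρ(A))β| (cardinal inequality) for every E-class A; (2) there exist λ, μ ∈ reg(T) such that α = λβμ (as functions, α = μ ∘ β ∘ λ). -/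
universe u

theorem regT_iff_perm {X : Type u} (E : Setoid X) (γ : X → X) :
    γ ∈ regT E ↔ ∃ p : Quotient E ≃ Quotient E,
      ∀ x, Quotient.mk E (γ x) = p (Quotient.mk E x) := by
  constructor
  · rintro ⟨h1, h2⟩
    let f : Quotient E → Quotient E :=
      Quotient.map γ (fun x y hxy => (h1 x y).1 hxy)
    have hf : Function.Bijective f := by
      constructor
      · intro a b
        induction a using Quotient.inductionOn
        induction b using Quotient.inductionOn
        intro hab
        exact Quotient.sound ((h1 _ _).2 (Quotient.exact hab))
      · intro b
        induction b using Quotient.inductionOn with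
        | h x =>
          obtain ⟨_, hy, z, rfl⟩ := h2 x
          exact ⟨Quotient.mk E z, Quotient.sound (E.symm hy)⟩
    exact ⟨Equiv.ofBijective f hf, fun x => rfl⟩
  · rintro ⟨p, hp⟩
    refine ⟨fun x y => ?_, fun x => ?_⟩
    · constructor
      · intro h
        apply Quotient.exact (s := E)
        rw [hp, hp, Quotient.sound h]
      · intro h
        apply Quotient.exact (s := E)
        apply p.injective
        rw [← hp, ← hp]
        exact Quotient.sound h
    · obtain ⟨z, hz⟩ := Quotient.exists_rep (p.symm (Quotient.mk E x))
      refine ⟨γ z, ?_, z, rfl⟩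
      apply Quotient.exact (s := E)
      rw [hp]
      erw [hz]
      simp

/-- `α = λβμ` for some `λ, μ ∈ reg(T)` iff there is a permutation `ρ` of `X/E`
with `|Aα| ≤ |(ρ A)β|` for every `E`-class `A`. -/
theorem stmt7 {X : Type u} [Nonempty X] (E : Setoid X) (α β : X → X)
    (hα : α ∈ regT E) (hβ : β ∈ regT E) :
    (∃ ρ : Quotient E ≃ Quotient E, ∀ A : Quotient E,
        Cardinal.mk ↥(α '' clsQ E A) ≤ Cardinal.mk ↥(β '' clsQ E (ρ A))) ↔
      (∃ l ∈ regT E, ∃ m ∈ regT E, α = m ∘ β ∘ l) := by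
  obtain ⟨pa, hpa⟩ := (regT_iff_perm E α).1 hα
  obtain ⟨pb, hpb⟩ := (regT_iff_perm E β).1 hβ
  constructor
  · rintro ⟨ρ, hρ⟩
    have hf : ∀ A : Quotient E,
        Nonempty (↥(α '' clsQ E A) ↪ ↥(β '' clsQ E (ρ A))) := fun A => hρ A
    let f := fun A => (hf A).some
    have hl : ∀ x, ∃ w, Quotient.mk E w = ρ (Quotient.mk E x) ∧
        β w = f (Quotient.mk E x) ⟨α x, x, rfl, rfl⟩ := by
      intro x
      obtain ⟨w, hw, hw'⟩ := (f (Quotient.mk E x) ⟨α x, x, rfl, rfl⟩).2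
      exact ⟨w, hw, hw'⟩
    choose l hl1 hl2 using hl
    have key0 : ∀ A : Quotient E, ∀ x y (hx : Quotient.mk E x = A) (hy : Quotient.mk E y = A),
        β (l x) = β (l y) → α x = α y := by
      intro A x y hx hy h
      have ex : β (l x) = f A ⟨α x, x, hx, rfl⟩ := by subst hx; exact hl2 x
      have ey : β (l y) = f A ⟨α y, y, hy, rfl⟩ := by subst hy; exact hl2 y
      rw [ex, ey] at h
      have := (f A).injective (Subtype.ext h)
      exact congrArg Subtype.val this
    have key : ∀ x y, β (l x) = β (l y) → α x = α y := by
      intro x y h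
      refine key0 (Quotient.mk E y) x y ?_ rfl h
      apply ρ.injective
      apply pb.injective
      rw [← hl1, ← hl1, ← hpb, ← hpb, h]
    have hm : ∀ y, ∃ z, Quotient.mk E z = pa (ρ.symm (pb.symm (Quotient.mk E y))) ∧
        ∀ x, β (l x) = y → z = α x := by
      intro y
      by_cases h : ∃ x, β (l x) = y
      · obtain ⟨x, rfl⟩ := h
        refine ⟨α x, ?_, fun x' h' => (key _ _ h').symm⟩
        rw [hpb, hl1, hpa]
        simp
      · obtain ⟨z, hz⟩ := Quotient.exists_rep (pa (ρ.symm (pb.symm (Quotient.mk E y))))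
        exact ⟨z, hz, fun x hx => (h ⟨x, hx⟩).elim⟩
    choose m hm1 hm2 using hm
    refine ⟨l, (regT_iff_perm E l).2 ⟨ρ, hl1⟩, m,
      (regT_iff_perm E m).2 ⟨(pb.symm.trans ρ.symm).trans pa, hm1⟩, ?_⟩
    funext x
    exact (hm2 _ x rfl).symm
  · rintro ⟨l, hl, m, -, rfl⟩
    obtain ⟨ρ, hρ⟩ := (regT_iff_perm E l).1 hl
    refine ⟨ρ, fun A => ?_⟩
    refine le_trans (Cardinal.mk_le_mk_of_subset ?_) (Cardinal.mk_image_le (f := m))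
    rintro _ ⟨x, hx, rfl⟩
    refine ⟨β (l x), ⟨l x, ?_, rfl⟩, rfl⟩
    have hx' : Quotient.mk E x = A := hx
    show Quotient.mk E (l x) = ρ A
    rw [hρ, hx']
end

section
/- Let r be a function assigning to each E-class A a cardinal number r(A) with 2 ≤ r(A) ≤ |A|⁺ (the cardinal successor of |A|), and set Q(r) = {α ∈ reg(T) : there exists a bijection σ of X/E onto itself such that |Aα| < r(σ(A)) for every E-class A}. Then Q(r) is a two-sided ideal of reg(T): for all α ∈ Q(r) and β ∈ reg(T), both αβ and βα belong to Q(r). -/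
universe u

/-- The ideal `Q(r)` of `reg(T)`. -/
def Qr {X : Type u} (E : Setoid X) (r : Quotient E → Cardinal.{u}) : Set (X → X) :=
  {α | α ∈ regT E ∧ ∃ σ : Quotient E ≃ Quotient E,
    ∀ A : Quotient E, Cardinal.mk ↥(α '' clsQ E A) < r (σ A)}

theorem regT_comp {X : Type u} (E : Setoid X) {f g : X → X} (hf : f ∈ regT E)
    (hg : g ∈ regT E) : g ∘ f ∈ regT E := by
  refine ⟨fun x y => (hf.1 x y).trans (hg.1 _ _), fun x => ?_⟩
  obtain ⟨_, hx, y, rfl⟩ := hg.2 x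
  obtain ⟨_, hy, z, rfl⟩ := hf.2 y
  exact ⟨g (f z), E.iseqv.trans hx ((hg.1 _ _).1 hy), z, rfl⟩

theorem regT_equiv {X : Type u} (E : Setoid X) {f : X → X} (hf : f ∈ regT E) :
    ∃ e : Quotient E ≃ Quotient E, ∀ x : X, e (Quotient.mk E x) = Quotient.mk E (f x) := by
  let m : Quotient E → Quotient E :=
    Quotient.lift (fun x => Quotient.mk E (f x))
      (fun x y h => Quotient.sound ((hf.1 x y).1 h))
  have hm : Function.Bijective m := by
    constructor
    · intro a b
      induction a using Quotient.inductionOn with | _ x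
      induction b using Quotient.inductionOn with | _ y
      intro h
      exact Quotient.sound ((hf.1 x y).2 (Quotient.exact h))
    · intro b
      induction b using Quotient.inductionOn with | _ y
      obtain ⟨_, hy, z, rfl⟩ := hf.2 y
      exact ⟨Quotient.mk E z, Quotient.sound (E.iseqv.symm hy)⟩
  exact ⟨Equiv.ofBijective m hm, fun x => rfl⟩

/-- `Q(r)` is a two-sided ideal of `reg(T)`. -/
theorem stmt8 {X : Type u} [Nonempty X] (E : Setoid X)
    (r : Quotient E → Cardinal.{u})
    (hr : ∀ A : Quotient E, 2 ≤ r A ∧ r A ≤ Order.succ (Cardinal.mk ↥(clsQ E A))) :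
    ∀ α ∈ Qr E r, ∀ β ∈ regT E, β ∘ α ∈ Qr E r ∧ α ∘ β ∈ Qr E r := by
  rintro α ⟨hα, σ, hσ⟩ β hβ
  refine ⟨⟨regT_comp E hα hβ, σ, fun A => ?_⟩, regT_comp E hβ hα, ?_⟩
  · rw [Set.image_comp]
    exact Cardinal.mk_image_le.trans_lt (hσ A)
  · obtain ⟨e, he⟩ := regT_equiv E hβ
    refine ⟨e.trans σ, fun A => lt_of_le_of_lt (Cardinal.mk_le_mk_of_subset ?_) (hσ (e A))⟩
    rintro _ ⟨x, hx, rfl⟩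
    refine ⟨β x, ?_, rfl⟩
    have hx' : Quotient.mk E x = A := hx
    change Quotient.mk E (β x) = e A
    rw [← hx', he]
end

section
/- A nonempty subset J of reg(T) is a two-sided ideal of reg(T) (i.e., αβ ∈ J and βα ∈ J for all α ∈ J, β ∈ reg(T)) if and only if there is a nonempty index set K and, for each k ∈ K, a function r^k assigning to each E-class A a cardinal r^k(A) with 2 ≤ r^k(A) ≤ |A|⁺, such that J = ⋃_{k ∈ K} Q(r^k). -/
universe u

theorem regT_iff_aux {X : Type u} (E : Setoid X) (α : X → X) :
    α ∈ regT E ↔ ∃ p : Quotient E ≃ Quotient E,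
      ∀ x, Quotient.mk E (α x) = p (Quotient.mk E x) := by
  constructor
  · rintro ⟨h1, h2⟩
    let f : Quotient E → Quotient E :=
      Quotient.map α (fun x y hxy => (h1 x y).1 hxy)
    have hf : Function.Bijective f := by
      constructor
      · intro a b
        induction a using Quotient.inductionOn with | _ a => ?_
        induction b using Quotient.inductionOn with | _ b => ?_
        intro h
        exact Quotient.sound ((h1 a b).2 (Quotient.exact h))
      · intro a
        induction a using Quotient.inductionOn with | _ a => ?_
        obtain ⟨_, hy, x, rfl⟩ := h2 a
        exact ⟨Quotient.mk E x, (Quotient.sound hy).symm⟩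
    exact ⟨Equiv.ofBijective f hf, fun x => rfl⟩
  · rintro ⟨p, hp⟩
    refine ⟨fun x y => ?_, fun x => ?_⟩
    · constructor
      · intro h
        apply Quotient.exact (s := E)
        rw [hp, hp, Quotient.sound (s := E) h]
      · intro h
        apply Quotient.exact (s := E)
        apply p.injective
        rw [← hp, ← hp]
        exact Quotient.sound (s := E) h
    · obtain ⟨y, hy⟩ := Quotient.exists_rep (p.symm (Quotient.mk E x))
      refine ⟨α y, ?_, y, rfl⟩
      apply Quotient.exact (s := E)
      rw [hp, hy, Equiv.apply_symm_apply]

theorem clsQ_nonempty_aux {X : Type u} (E : Setoid X) (A : Quotient E) :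
    (clsQ E A).Nonempty := by
  obtain ⟨y, hy⟩ := Quotient.exists_rep A
  exact ⟨y, hy⟩

theorem exists_inj_aux {X : Type u} {s t : Set X} (h : Cardinal.mk s ≤ Cardinal.mk t) :
    ∃ f : X → X, Set.MapsTo f s t ∧ Set.InjOn f s := by
  classical
  obtain ⟨e⟩ := h
  refine ⟨fun x => if hx : x ∈ s then (e ⟨x, hx⟩ : X) else x, ?_, ?_⟩
  · intro x hx
    simp only [hx, dite_true]
    exact (e ⟨x, hx⟩).2
  · intro x hx y hy hxy
    simp only [hx, hy, dite_true] at hxy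
    exact congrArg Subtype.val (e.injective (Subtype.ext hxy))

theorem factor_aux {X : Type u} (E : Setoid X) (α β : X → X)
    (p q σ : Quotient E ≃ Quotient E)
    (hp : ∀ x, Quotient.mk E (α x) = p (Quotient.mk E x))
    (hq : ∀ x, Quotient.mk E (β x) = q (Quotient.mk E x))
    (h : ∀ A, Cardinal.mk ↥(β '' clsQ E A) ≤ Cardinal.mk ↥(α '' clsQ E (p.symm (σ A)))) :
    ∃ γ ∈ regT E, ∃ δ ∈ regT E, δ ∘ (α ∘ γ) = β := by
  choose f hf hinj using fun A => exists_inj_aux (h A)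
  have h1 : ∀ x, ∃ z, Quotient.mk E z = p.symm (σ (Quotient.mk E x)) ∧
      α z = f (Quotient.mk E x) (β x) := by
    intro x
    obtain ⟨z, hz, hz'⟩ := hf (Quotient.mk E x) ⟨x, rfl, rfl⟩
    exact ⟨z, hz, hz'⟩
  choose γ hγ hγ' using h1
  have h2 : ∀ y, ∃ w ∈ β '' clsQ E (σ.symm (Quotient.mk E y)),
      ∀ v ∈ β '' clsQ E (σ.symm (Quotient.mk E y)),
        f (σ.symm (Quotient.mk E y)) v = y → w = v := by
    intro y
    by_cases hy : ∃ w ∈ β '' clsQ E (σ.symm (Quotient.mk E y)),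
        f (σ.symm (Quotient.mk E y)) w = y
    · obtain ⟨w, hw, hwy⟩ := hy
      exact ⟨w, hw, fun v hv hvy => hinj _ hw hv (hwy.trans hvy.symm)⟩
    · obtain ⟨w, hw⟩ := (clsQ_nonempty_aux E (σ.symm (Quotient.mk E y))).image β
      exact ⟨w, hw, fun v hv hvy => absurd ⟨v, hv, hvy⟩ hy⟩
  choose δ hδ hδ' using h2
  refine ⟨γ, (regT_iff_aux E γ).2 ⟨σ.trans p.symm, hγ⟩,
    δ, (regT_iff_aux E δ).2 ⟨σ.symm.trans q, ?_⟩, ?_⟩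
  · intro y
    obtain ⟨x, hx, hxy⟩ := hδ y
    have hx' : Quotient.mk E x = σ.symm (Quotient.mk E y) := hx
    rw [← hxy, hq, hx']
    rfl
  · funext x
    have e : σ.symm (Quotient.mk E (α (γ x))) = Quotient.mk E x := by
      rw [hp, hγ]; simp
    apply hδ' (α (γ x)) (β x)
    · rw [e]; exact ⟨x, rfl, rfl⟩
    · rw [e]; exact (hγ' x).symm

/-- The two-sided ideals of `reg(T)` are exactly the unions `⋃ₖ Q(rᵏ)`. -/
theorem stmt9 {X : Type u} [Nonempty X] (E : Setoid X) (J : Set (X → X))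
    (hJne : J.Nonempty) (hJsub : J ⊆ regT E) :
    (∀ α ∈ J, ∀ β ∈ regT E, β ∘ α ∈ J ∧ α ∘ β ∈ J) ↔
      ∃ (K : Type u) (_ : Nonempty K) (r : K → Quotient E → Cardinal.{u}),
        (∀ k : K, ∀ A : Quotient E,
          2 ≤ r k A ∧ r k A ≤ Order.succ (Cardinal.mk ↥(clsQ E A))) ∧
        J = ⋃ k : K, Qr E (r k) := by
  constructor
  · intro hJ
    have hex : ∀ α : J, ∃ p : Quotient E ≃ Quotient E,
      ∀ x, Quotient.mk E (α.1 x) = p (Quotient.mk E x) :=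
      fun α => (regT_iff_aux E α.1).1 (hJsub α.2)
    choose p hp using hex
    refine ⟨J, hJne.to_subtype,
      fun α A => Order.succ (Cardinal.mk ↥(α.1 '' clsQ E ((p α).symm A))), ?_, ?_⟩
    · intro α A
      constructor
      · have h1 : (1 : Cardinal.{u}) ≤ Cardinal.mk ↥(α.1 '' clsQ E ((p α).symm A)) := by
          rw [Cardinal.one_le_iff_ne_zero, Cardinal.mk_ne_zero_iff]
          exact ((clsQ_nonempty_aux E _).image _).to_subtype
        have h2 := Order.succ_le_succ h1
        refine le_trans ?_ h2
        rw [← one_add_one_eq_two]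
        exact Cardinal.add_one_le_succ 1
      · apply Order.succ_le_succ
        apply Cardinal.mk_le_mk_of_subset
        rintro _ ⟨x, hx, rfl⟩
        have hx' : Quotient.mk E x = (p α).symm A := hx
        change Quotient.mk E (α.1 x) = A
        rw [hp, hx', Equiv.apply_symm_apply]
    · ext β
      rw [Set.mem_iUnion]
      constructor
      · intro hβ
        refine ⟨⟨β, hβ⟩, hJsub hβ, p ⟨β, hβ⟩, fun A => ?_⟩
        beta_reduce
        rw [Equiv.symm_apply_apply]
        exact Order.lt_succ _
      · rintro ⟨α, hβ, σ, hσ⟩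
        obtain ⟨q, hq⟩ := (regT_iff_aux E β).1 hβ
        obtain ⟨γ, hγ, δ, hδ, e⟩ := factor_aux E α.1 β (p α) q σ (hp α) hq
          (fun A => Order.lt_succ_iff.1 (hσ A))
        rw [← e]
        exact (hJ _ (hJ _ α.2 γ hγ).2 δ hδ).1
  · rintro ⟨K, _, r, -, rfl⟩ α hα β hβ
    rw [Set.mem_iUnion] at hα
    obtain ⟨k, hαr, σ, hσ⟩ := hα
    obtain ⟨p, hp⟩ := (regT_iff_aux E α).1 hαr
    obtain ⟨q, hq⟩ := (regT_iff_aux E β).1 hβ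
    constructor
    · refine Set.mem_iUnion.2 ⟨k, (regT_iff_aux E _).2 ⟨p.trans q, fun x => ?_⟩, σ, fun A => ?_⟩
      · simp [hp, hq]
      · rw [Set.image_comp]
        exact Cardinal.mk_image_le.trans_lt (hσ A)
    · refine Set.mem_iUnion.2 ⟨k, (regT_iff_aux E _).2 ⟨q.trans p, fun x => ?_⟩,
        q.trans σ, fun A => ?_⟩
      · simp [hp, hq]
      · refine lt_of_le_of_lt (Cardinal.mk_le_mk_of_subset ?_) (hσ (q A))
        rintro _ ⟨x, hx, rfl⟩
        have hx' : Quotient.mk E x = A := hx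
        refine ⟨β x, ?_, rfl⟩
        change Quotient.mk E (β x) = q A
        rw [hq, hx']
end

section
/- Let s be a function assigning to each E-class A a cardinal s(A) with 1 ≤ s(A) ≤ |A|, and let r(A) = s(A)⁺ (the successor cardinal). Then Q(r) is a principal ideal of reg(T): there exists γ ∈ Q(r) such that Q(r) = {λγμ : λ, μ ∈ reg(T)} (as functions, Q(r) = {μ ∘ γ ∘ λ : λ, μ ∈ reg(T)}). -/
universe u

theorem regT_iff {X : Type u} (E : Setoid X) (α : X → X) :
    α ∈ regT E ↔ ∃ τ : Quotient E ≃ Quotient E, ∀ x, Quotient.mk E (α x) = τ (Quotient.mk E x) := by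
  constructor
  · rintro ⟨h1, h2⟩
    let t : Quotient E → Quotient E :=
      Quotient.map α (fun a b h => (h1 a b).1 h)
    have ht : Function.Bijective t := by
      constructor
      · intro a b
        induction a using Quotient.inductionOn
        induction b using Quotient.inductionOn
        intro h
        exact Quotient.sound ((h1 _ _).2 (Quotient.exact h))
      · intro b
        induction b using Quotient.inductionOn with
        | h b =>
          obtain ⟨_, hy, ⟨x, rfl⟩⟩ := h2 b
          exact ⟨Quotient.mk E x, Quotient.sound (E.symm hy)⟩
    exact ⟨Equiv.ofBijective t ht, fun x => rfl⟩
  · rintro ⟨τ, hτ⟩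
    refine ⟨fun x y => ⟨fun h => ?_, fun h => ?_⟩, fun x => ?_⟩
    · apply Quotient.exact (s := E)
      rw [hτ, hτ, Quotient.sound (s := E) h]
    · apply Quotient.exact (s := E)
      apply τ.injective
      rw [← hτ, ← hτ]
      exact Quotient.sound (s := E) h
    · obtain ⟨y, hy⟩ := Quotient.exists_rep (τ.symm (Quotient.mk E x))
      refine ⟨α y, ?_, y, rfl⟩
      apply Quotient.exact (s := E)
      rw [hτ, hy, Equiv.apply_symm_apply]

theorem exists_injOn_of_mk_le {X : Type u} (s t : Set X) (h : Cardinal.mk s ≤ Cardinal.mk t) :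
    ∃ f : X → X, Set.MapsTo f s t ∧ Set.InjOn f s := by
  classical
  obtain ⟨i⟩ := Cardinal.le_def _ _ |>.1 h
  refine ⟨fun x => if hx : x ∈ s then i ⟨x, hx⟩ else x, fun x hx => ?_, fun x hx y hy hxy => ?_⟩
  · simp [hx]
  · simp only [hx, hy, dif_pos] at hxy
    simpa using i.injective (Subtype.ext hxy)

/-- If `r A = s A ⁺` with `1 ≤ s A ≤ |A|`, then `Q(r)` is a principal ideal of `reg(T)`. -/
theorem stmt10 {X : Type u} [Nonempty X] (E : Setoid X)
    (s : Quotient E → Cardinal.{u})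
    (hs : ∀ A : Quotient E, 1 ≤ s A ∧ s A ≤ Cardinal.mk ↥(clsQ E A)) :
    ∃ γ ∈ Qr E (fun A => Order.succ (s A)),
      Qr E (fun A => Order.succ (s A)) =
        {f | ∃ l ∈ regT E, ∃ m ∈ regT E, f = m ∘ γ ∘ l} := by
  classical
  have h1 : ∀ A, ∃ S : Set X, S ⊆ clsQ E A ∧ Cardinal.mk S = s A := fun A =>
    Cardinal.le_mk_iff_exists_subset.1 (hs A).2
  choose S hSsub hScard using h1
  have hSne : ∀ A, (S A).Nonempty := by
    intro A
    rw [← Set.nonempty_coe_sort, ← Cardinal.mk_ne_zero_iff, hScard]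
    exact (lt_of_lt_of_le zero_lt_one (hs A).1).ne'
  have h2 : ∀ x, ∃ y, y ∈ S (Quotient.mk E x) ∧ (x ∈ S (Quotient.mk E x) → y = x) := by
    intro x
    by_cases hx : x ∈ S (Quotient.mk E x)
    · exact ⟨x, hx, fun _ => rfl⟩
    · obtain ⟨y, hy⟩ := hSne (Quotient.mk E x)
      exact ⟨y, hy, fun h => absurd h hx⟩
  choose γ hγS hγ using h2
  have hγreg : γ ∈ regT E :=
    (regT_iff E γ).2 ⟨Equiv.refl _, fun x => hSsub _ (hγS x)⟩
  refine ⟨γ, ⟨hγreg, Equiv.refl _, fun A => ?_⟩, ?_⟩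
  · rw [Order.lt_succ_iff, Equiv.refl_apply, ← hScard]
    apply Cardinal.mk_le_mk_of_subset
    rintro _ ⟨x, rfl, rfl⟩
    exact hγS x
  ext α
  constructor
  · rintro ⟨hα, σ, hσ⟩
    obtain ⟨τ, hτ⟩ := (regT_iff E α).1 hα
    have h3 : ∀ A, ∃ f : X → X, Set.MapsTo f (α '' clsQ E A) (S (σ A)) ∧
        Set.InjOn f (α '' clsQ E A) := by
      intro A
      apply exists_injOn_of_mk_le
      rw [hScard]
      exact Order.lt_succ_iff.1 (hσ A)
    choose f hfm hfi using h3
    have h4 : ∀ z, ∃ w, w ∈ α '' clsQ E (σ.symm (Quotient.mk E z)) ∧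
        ∀ y ∈ α '' clsQ E (σ.symm (Quotient.mk E z)),
          f (σ.symm (Quotient.mk E z)) y = z → w = y := by
      intro z
      by_cases h : ∃ y ∈ α '' clsQ E (σ.symm (Quotient.mk E z)),
          f (σ.symm (Quotient.mk E z)) y = z
      · obtain ⟨y, hy, hyz⟩ := h
        exact ⟨y, hy, fun y' hy' hyz' => hfi _ hy hy' (hyz.trans hyz'.symm)⟩
      · obtain ⟨x, hx⟩ := Quotient.exists_rep (σ.symm (Quotient.mk E z))
        exact ⟨α x, ⟨x, hx, rfl⟩, fun y hy hyz => absurd ⟨y, hy, hyz⟩ h⟩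
    choose m hm hmu using h4
    have hlS : ∀ x, f (Quotient.mk E x) (α x) ∈ S (σ (Quotient.mk E x)) := fun x =>
      hfm _ ⟨x, rfl, rfl⟩
    have hlq : ∀ x, Quotient.mk E (f (Quotient.mk E x) (α x)) = σ (Quotient.mk E x) := fun x =>
      hSsub _ (hlS x)
    refine ⟨fun x => f (Quotient.mk E x) (α x), (regT_iff E _).2 ⟨σ, hlq⟩, m,
      (regT_iff E _).2 ⟨σ.symm.trans τ, fun z => ?_⟩, ?_⟩
    · obtain ⟨x, hx, hxz⟩ := hm z
      rw [← hxz, hτ, Equiv.trans_apply]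
      exact congrArg τ hx
    · funext x
      have e1 : γ (f (Quotient.mk E x) (α x)) = f (Quotient.mk E x) (α x) := by
        apply hγ
        rw [hlq]
        exact hlS x
      have e2 : σ.symm (Quotient.mk E (f (Quotient.mk E x) (α x))) = Quotient.mk E x := by
        rw [hlq, Equiv.symm_apply_apply]
      simp only [Function.comp_apply]
      rw [e1]
      symm
      apply hmu
      · rw [e2]; exact ⟨x, rfl, rfl⟩
      · rw [e2]
  · rintro ⟨l, hl, m, hm, rfl⟩
    obtain ⟨σ, hσ⟩ := (regT_iff E l).1 hl
    obtain ⟨τ, hτ⟩ := (regT_iff E m).1 hm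
    refine ⟨(regT_iff E _).2 ⟨σ.trans τ, fun x => ?_⟩, σ, fun A => ?_⟩
    · simp only [Function.comp_apply, Equiv.trans_apply]
      rw [hτ, ← hσ]
      exact congrArg τ (hSsub _ (hγS (l x)))
    · rw [Order.lt_succ_iff, ← hScard]
      refine le_trans (Cardinal.mk_le_mk_of_subset ?_) (Cardinal.mk_image_le (f := m))
      rintro _ ⟨x, rfl, rfl⟩
      refine ⟨γ (l x), ?_, rfl⟩
      rw [← hσ]
      exact hγS (l x)
end

section
/- Q(2) = {α ∈ reg(T) : |Aα| = 1 for every E-class A} is the smallest two-sided ideal of reg(T): Q(2) is nonempty, αβ ∈ Q(2) and βα ∈ Q(2) for all α ∈ Q(2) and β ∈ reg(T), and Q(2) ⊆ J for every two-sided ideal J of reg(T). Consequently Q(2) is the unique minimal ideal (the kernel) of reg(T). -/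
universe u

/-- The kernel `Q(2)` of `reg(T)`: every `E`-class has a one-point image. -/
def Q2 {X : Type u} (E : Setoid X) : Set (X → X) :=
  {α | α ∈ regT E ∧ ∀ x : X, ∃ y : X, α '' cls E x = {y}}

theorem mem_regT_iff {X : Type u} (E : Setoid X) (α : X → X) :
    α ∈ regT E ↔ (∀ x y, E x y ↔ E (α x) (α y)) ∧ ∀ x, ∃ z, E x (α z) := by
  constructor
  · rintro ⟨h, h'⟩
    refine ⟨h, fun x => ?_⟩
    obtain ⟨_, hy, z, rfl⟩ := h' x
    exact ⟨z, hy⟩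
  · rintro ⟨h, h'⟩
    refine ⟨h, fun x => ?_⟩
    obtain ⟨z, hz⟩ := h' x
    exact ⟨α z, hz, z, rfl⟩

theorem mem_Q2_iff {X : Type u} (E : Setoid X) (α : X → X) :
    α ∈ Q2 E ↔ α ∈ regT E ∧ ∀ x y, E x y → α x = α y := by
  constructor
  · rintro ⟨h, h'⟩
    refine ⟨h, fun x y hxy => ?_⟩
    obtain ⟨w, hw⟩ := h' x
    have h1 : α x ∈ α '' cls E x := ⟨x, E.refl x, rfl⟩
    have h2 : α y ∈ α '' cls E x := ⟨y, hxy, rfl⟩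
    rw [hw] at h1 h2
    exact h1.trans h2.symm
  · rintro ⟨h, h'⟩
    refine ⟨h, fun x => ⟨α x, ?_⟩⟩
    ext w
    constructor
    · rintro ⟨y, hy, rfl⟩
      exact (h' x y hy).symm
    · rintro rfl
      exact ⟨x, E.refl x, rfl⟩

theorem comp_mem_regT {X : Type u} (E : Setoid X) {α β : X → X}
    (ha : α ∈ regT E) (hb : β ∈ regT E) : β ∘ α ∈ regT E := by
  rw [mem_regT_iff] at *
  refine ⟨fun x y => (ha.1 x y).trans (hb.1 _ _), fun x => ?_⟩
  obtain ⟨z, hz⟩ := hb.2 x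
  obtain ⟨w, hw⟩ := ha.2 z
  exact ⟨w, E.trans hz ((hb.1 _ _).1 hw)⟩

/-- `Q(2)` is the smallest (hence the unique minimal) two-sided ideal of `reg(T)`. -/
theorem stmt12 {X : Type u} [Nonempty X] (E : Setoid X) :
    (Q2 E).Nonempty ∧
    (∀ α ∈ Q2 E, ∀ β ∈ regT E, β ∘ α ∈ Q2 E ∧ α ∘ β ∈ Q2 E) ∧
    (∀ J : Set (X → X), J.Nonempty → J ⊆ regT E →
      (∀ α ∈ J, ∀ β ∈ regT E, β ∘ α ∈ J ∧ α ∘ β ∈ J) → Q2 E ⊆ J) := by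
  refine ⟨⟨fun x => (Quotient.mk E x).out, ?_⟩, ?_, ?_⟩
  · have h : ∀ x, E (Quotient.mk E x).out x := fun x => Quotient.mk_out x
    rw [mem_Q2_iff, mem_regT_iff]
    refine ⟨⟨fun x y => ⟨fun hxy => ?_, fun hxy => ?_⟩, fun x => ⟨x, E.symm (h x)⟩⟩, ?_⟩
    · exact E.trans (h x) (E.trans hxy (E.symm (h y)))
    · exact E.trans (E.symm (h x)) (E.trans hxy (h y))
    · intro x y hxy
      exact congrArg Quotient.out (Quotient.sound hxy)
  · intro α ha β hb
    rw [mem_Q2_iff] at ha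
    rw [mem_Q2_iff, mem_Q2_iff]
    refine ⟨⟨comp_mem_regT E ha.1 hb, fun x y hxy => congrArg β (ha.2 x y hxy)⟩,
      comp_mem_regT E hb ha.1, fun x y hxy => ha.2 _ _ ?_⟩
    exact (((mem_regT_iff E β).1 hb).1 x y).1 hxy
  · rintro J ⟨α, hJ⟩ hsub hid γ hγ
    have ha := (mem_regT_iff E α).1 (hsub hJ)
    obtain ⟨hg, hc⟩ := (mem_Q2_iff E γ).1 hγ
    have hg' := (mem_regT_iff E γ).1 hg
    choose s hs using ha.2
    choose t ht using hg'.2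
    have hm : (fun y => γ (t (s y))) ∈ regT E := by
      rw [mem_regT_iff]
      refine ⟨fun x y => ⟨fun hxy => ?_, fun hxy => ?_⟩, fun x => ⟨α x, ?_⟩⟩
      · have h1 := (ha.1 _ _).2 (E.trans (E.symm (hs x)) (E.trans hxy (hs y)))
        exact E.trans (E.symm (ht _)) (E.trans h1 (ht _))
      · have h1 : E (s x) (s y) := E.trans (ht _) (E.trans hxy (E.symm (ht _)))
        exact E.trans (hs x) (E.trans ((ha.1 _ _).1 h1) (E.symm (hs y)))
      · exact E.trans ((ha.1 _ _).2 (hs (α x))) (ht _)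
    have key : γ = (fun y => γ (t (s y))) ∘ (α ∘ γ) := by
      funext x
      refine hc _ _ ((hg'.1 _ _).2 ?_)
      exact E.trans ((ha.1 _ _).2 (hs (α (γ x)))) (ht _)
    rw [key]
    exact (hid _ (hid α hJ γ hg).2 _ hm).1
end

section
/- Q(2) is a right group: (i) Q(2) is a regular semigroup, i.e., for every α ∈ Q(2) there exists β ∈ Q(2) with αβα = α (α(β(α(x))) = α(x) for all x); and (ii) Q(2) is left cancellative, i.e., for all α, β, γ ∈ Q(2), if γα = γβ (α(γ(x)) = β(γ(x)) for all x) then α = β. -/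
universe u

/-- `Q(2)` is a right group: it is regular and left cancellative. -/
theorem stmt13 {X : Type u} [Nonempty X] (E : Setoid X) :
    (∀ α ∈ Q2 E, ∃ β ∈ Q2 E, ∀ x : X, α (β (α x)) = α x) ∧
    (∀ α ∈ Q2 E, ∀ β ∈ Q2 E, ∀ γ ∈ Q2 E, α ∘ γ = β ∘ γ → α = β) := by
  have key : ∀ α ∈ Q2 E, ∀ x y : X, E.r x y → α x = α y := by
    intro α hα x y h
    obtain ⟨z, hz⟩ := hα.2 x
    have h1 : α x ∈ α '' cls E x := ⟨x, E.iseqv.refl x, rfl⟩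
    have h2 : α y ∈ α '' cls E x := ⟨y, h, rfl⟩
    rw [hz] at h1 h2
    exact h1.trans h2.symm
  constructor
  · intro α hα
    have hex : ∀ q : Quotient E, ∃ z, E.r q.out (α z) := by
      intro q
      obtain ⟨y, hy, z, rfl⟩ := hα.1.2 q.out
      exact ⟨z, hy⟩
    choose f hf using hex
    let β : X → X := fun x => f (Quotient.mk E x)
    have hβ : ∀ x, E.r x (α (β x)) := fun x =>
      E.iseqv.trans (E.iseqv.symm (Quotient.mk_out x)) (hf (Quotient.mk E x))
    have hc : ∀ x y, E.r x y → β x = β y := fun x y h => congrArg f (Quotient.sound h)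
    have hr : ∀ x, E.r x (β (α x)) := fun x => (hα.1.1 _ _).2 (hβ (α x))
    refine ⟨β, ⟨⟨?_, ?_⟩, ?_⟩, ?_⟩
    · intro x y
      refine ⟨fun h => hc x y h ▸ E.iseqv.refl _, fun h => ?_⟩
      exact E.iseqv.trans (hβ x) (E.iseqv.trans ((hα.1.1 _ _).1 h) (E.iseqv.symm (hβ y)))
    · intro x
      exact ⟨β (α x), hr x, α x, rfl⟩
    · intro x
      refine ⟨β x, Set.eq_singleton_iff_unique_mem.2 ⟨⟨x, E.iseqv.refl x, rfl⟩, ?_⟩⟩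
      rintro _ ⟨y, hy, rfl⟩
      exact (hc x y hy).symm
    · intro x
      exact (key α hα _ _ (hr x)).symm
  · intro α hα β hβ γ hγ h
    funext x
    obtain ⟨_, hy, z, rfl⟩ := hγ.1.2 x
    rw [key α hα _ _ hy, key β hβ _ _ hy]
    exact congrFun h z
end

section
/- For α, β ∈ Q(2), α and β are Green's H-related in the semigroup Q(2) (i.e., there exist γ, δ ∈ Q(2) ∪ {id_X} with γα = β and δβ = α, and there exist γ', δ' ∈ Q(2) ∪ {id_X} with αγ' = β and βδ' = α) if and only if Xα = Xβ. -/
universe u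

theorem Q2_iff {X : Type u} (E : Setoid X) (α : X → X) : α ∈ Q2 E ↔
    (∀ x y, E.r x y ↔ E.r (α x) (α y)) ∧ (∀ x, ∃ z, E.r x (α z)) ∧
      ∀ x y, E.r x y → α x = α y := by
  constructor
  · rintro ⟨⟨h1, h2⟩, h3⟩
    refine ⟨h1, fun x => ?_, fun x y hxy => ?_⟩
    · obtain ⟨_, hy, z, rfl⟩ := h2 x
      exact ⟨z, hy⟩
    · obtain ⟨w, hw⟩ := h3 x
      have a : α x ∈ α '' cls E x := ⟨x, E.refl x, rfl⟩
      have b : α y ∈ α '' cls E x := ⟨y, hxy, rfl⟩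
      rw [hw] at a b
      exact a.trans b.symm
  · rintro ⟨h1, h2, h3⟩
    refine ⟨⟨h1, fun x => ?_⟩, fun x => ⟨α x, ?_⟩⟩
    · obtain ⟨z, hz⟩ := h2 x
      exact ⟨α z, hz, z, rfl⟩
    · ext w
      constructor
      · rintro ⟨y, hy, rfl⟩
        exact (h3 x y hy).symm
      · rintro rfl
        exact ⟨x, E.refl x, rfl⟩

theorem Q2_left {X : Type u} (E : Setoid X) (α β : X → X)
    (hα : α ∈ Q2 E) (hβ : β ∈ Q2 E) (h : Set.range α = Set.range β) :
    ∃ γ, (γ ∈ Q2 E ∨ γ = id) ∧ α ∘ γ = β := by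
  obtain ⟨a1, a2, a3⟩ := (Q2_iff E α).1 hα
  obtain ⟨b1, b2, b3⟩ := (Q2_iff E β).1 hβ
  have key : ∀ y : Set.range β, ∃ z, α z = y := fun y => h.symm.subset y.2
  choose g hg using key
  have hg' : ∀ x, α (g ⟨β x, x, rfl⟩) = β x := fun x => hg _
  have ainj : ∀ x y, α x = α y → E.r x y := fun x y e => (a1 x y).2 (e ▸ E.refl _)
  refine ⟨fun x => g ⟨β x, x, rfl⟩, Or.inl ((Q2_iff E _).2 ⟨fun x y => ?_, fun x => ?_, ?_⟩),
    funext hg'⟩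
  · rw [a1 (g _) (g _), hg', hg']
    exact b1 x y
  · have : α x ∈ Set.range β := h ▸ ⟨x, rfl⟩
    obtain ⟨z, hz⟩ := this
    exact ⟨z, ainj _ _ (by rw [hg', hz])⟩
  · intro x y hxy
    have := b3 x y hxy
    simp only [this]

theorem Q2_right {X : Type u} (E : Setoid X) (α β : X → X)
    (hα : α ∈ Q2 E) (hβ : β ∈ Q2 E) :
    ∃ γ, (γ ∈ Q2 E ∨ γ = id) ∧ γ ∘ α = β := by
  obtain ⟨a1, a2, a3⟩ := (Q2_iff E α).1 hα
  obtain ⟨b1, b2, b3⟩ := (Q2_iff E β).1 hβ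
  choose z hz using a2
  have hzE : ∀ x y, E.r x y ↔ E.r (z x) (z y) := fun x y => by
    rw [a1 (z x) (z y)]
    exact ⟨fun e => E.trans (E.symm (hz x)) (E.trans e (hz y)),
      fun e => E.trans (hz x) (E.trans e (E.symm (hz y)))⟩
  have hza : ∀ x, β (z (α x)) = β x := fun x =>
    b3 _ _ ((a1 _ _).2 (E.symm (hz (α x))))
  refine ⟨fun x => β (z x), Or.inl ((Q2_iff E _).2 ⟨fun x y => ?_, fun x => ?_, ?_⟩), funext hza⟩
  · exact (hzE x y).trans (b1 _ _)
  · obtain ⟨w, hw⟩ := b2 x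
    exact ⟨α w, by rw [hza]; exact hw⟩
  · exact fun x y hxy => b3 _ _ ((hzE x y).1 hxy)

/-- Green's `H`-relation on `Q(2)` (identity adjoined): `α H β` iff `Xα = Xβ`. -/
theorem stmt14 {X : Type u} [Nonempty X] (E : Setoid X) (α β : X → X)
    (hα : α ∈ Q2 E) (hβ : β ∈ Q2 E) :
    (((∃ γ, (γ ∈ Q2 E ∨ γ = id) ∧ α ∘ γ = β) ∧
      (∃ δ, (δ ∈ Q2 E ∨ δ = id) ∧ β ∘ δ = α)) ∧
     ((∃ γ', (γ' ∈ Q2 E ∨ γ' = id) ∧ γ' ∘ α = β) ∧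
      (∃ δ', (δ' ∈ Q2 E ∨ δ' = id) ∧ δ' ∘ β = α))) ↔
      Set.range α = Set.range β := by
  constructor
  · rintro ⟨⟨⟨γ, -, h1⟩, δ, -, h2⟩, -⟩
    apply Set.Subset.antisymm
    · rw [← h2]
      exact Set.range_comp_subset_range δ β
    · rw [← h1]
      exact Set.range_comp_subset_range γ α
  · intro h
    exact ⟨⟨Q2_left E α β hα hβ h, Q2_left E β α hβ hα h.symm⟩,
      Q2_right E α β hα hβ, Q2_right E β α hβ hα⟩
end

section
/- For each α ∈ Q(2), the set H_α = {β ∈ Q(2) : Xα = Xβ} is a subgroup of Q(2): H_α is closed under composition, there is an idempotent ε ∈ H_α with εβ = βε = β for all β ∈ H_α, and for every β ∈ H_α there is β' ∈ H_α with ββ' = β'β = ε. -/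
universe u

/-- The `H`-class of `α` inside `Q(2)`. -/
def Hcl {X : Type u} (E : Setoid X) (α : X → X) : Set (X → X) :=
  {β | β ∈ Q2 E ∧ Set.range α = Set.range β}

theorem mem_Hcl_iff {X : Type u} (E : Setoid X) (α : X → X) (hα : α ∈ Q2 E) (β : X → X) :
    β ∈ Hcl E α ↔ (∀ x y, E.r x y ↔ β x = β y) ∧ Set.range α = Set.range β := by
  have key : ∀ γ ∈ Q2 E, ∀ x y, E.r x y ↔ γ x = γ y := by
    rintro γ ⟨⟨h1, h2⟩, h3⟩ x y
    constructor
    · intro h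
      obtain ⟨z, hz⟩ := h3 x
      have hx : γ x ∈ γ '' cls E x := ⟨x, E.refl' x, rfl⟩
      have hy : γ y ∈ γ '' cls E x := ⟨y, h, rfl⟩
      rw [hz] at hx hy
      exact hx.trans hy.symm
    · intro h
      rw [h1 x y, h]
  constructor
  · rintro ⟨h, hr⟩
    exact ⟨key β h, hr⟩
  · rintro ⟨h, hr⟩
    refine ⟨⟨⟨?_, ?_⟩, ?_⟩, hr⟩
    · intro x y
      constructor
      · intro hxy
        rw [(h x y).1 hxy]
      · intro hxy
        obtain ⟨a, ha⟩ : β x ∈ Set.range α := hr ▸ ⟨x, rfl⟩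
        obtain ⟨b, hb⟩ : β y ∈ Set.range α := hr ▸ ⟨y, rfl⟩
        rw [← ha, ← hb, ← hα.1.1 a b, key α hα, ha, hb] at hxy
        exact (h x y).2 hxy
    · intro x
      rw [← hr]
      exact hα.1.2 x
    · intro x
      refine ⟨β x, ?_⟩
      ext w
      constructor
      · rintro ⟨v, hv, rfl⟩
        exact ((h x v).1 hv).symm
      · rintro rfl
        exact ⟨x, E.refl' x, rfl⟩

/-- Each `H_α = {β ∈ Q(2) : Xα = Xβ}` is a subgroup of `Q(2)`. -/
theorem stmt15 {X : Type u} [Nonempty X] (E : Setoid X) (α : X → X)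
    (hα : α ∈ Q2 E) :
    (∀ β ∈ Hcl E α, ∀ γ ∈ Hcl E α, γ ∘ β ∈ Hcl E α) ∧
    ∃ ε ∈ Hcl E α, ε ∘ ε = ε ∧
      (∀ β ∈ Hcl E α, β ∘ ε = β ∧ ε ∘ β = β) ∧
      (∀ β ∈ Hcl E α, ∃ β' ∈ Hcl E α, β' ∘ β = ε ∧ β ∘ β' = ε) := by
  have hαH := (mem_Hcl_iff E α hα α).1 ⟨hα, rfl⟩
  have hR : ∀ a b, E.r (α a) (α b) → α a = α b := fun a b h =>
    (hαH.1 a b).1 ((hα.1.1 a b).2 h)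
  have hex : ∀ x, ∃ z, E.r x (α z) := by
    intro x
    obtain ⟨_, h, z, rfl⟩ := hα.1.2 x
    exact ⟨z, h⟩
  choose f hf using hex
  have hfix : ∀ a, α (f (α a)) = α a := fun a => (hR _ _ (hf (α a))).symm
  have hεker : ∀ x y, E.r x y ↔ α (f x) = α (f y) := by
    intro x y
    constructor
    · intro h
      exact hR _ _ (E.trans' (E.symm' (hf x)) (E.trans' h (hf y)))
    · intro h
      have h1 := hf x
      rw [h] at h1
      exact E.trans' h1 (E.symm' (hf y))
  refine ⟨?_, fun x => α (f x), ?_, ?_, ?_, ?_⟩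
  · intro β hβ γ hγ
    have hβQ := hβ.1
    rw [mem_Hcl_iff E α hα] at hβ hγ ⊢
    refine ⟨fun x y => ?_, ?_⟩
    · rw [hβQ.1.1 x y]
      exact hγ.1 _ _
    · rw [hγ.2]
      apply Set.Subset.antisymm
      · rintro _ ⟨x, rfl⟩
        obtain ⟨_, h, z, rfl⟩ := hβQ.1.2 x
        exact ⟨z, ((hγ.1 _ _).1 h).symm⟩
      · rintro _ ⟨x, rfl⟩
        exact ⟨β x, rfl⟩
  · rw [mem_Hcl_iff E α hα]
    refine ⟨hεker, ?_⟩
    apply Set.Subset.antisymm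
    · rintro _ ⟨x, rfl⟩
      exact ⟨α x, hfix x⟩
    · rintro _ ⟨x, rfl⟩
      exact ⟨f x, rfl⟩
  · funext x
    exact hfix _
  · intro β hβ
    rw [mem_Hcl_iff E α hα] at hβ
    constructor
    · funext x
      exact ((hβ.1 _ _).1 (hf x)).symm
    · funext x
      obtain ⟨a, ha⟩ : β x ∈ Set.range α := hβ.2 ▸ ⟨x, rfl⟩
      simp only [Function.comp]
      rw [← ha, hfix]
  · intro β hβ
    rw [mem_Hcl_iff E α hα] at hβ
    have hg : ∀ a, ∃ z, β z = α a := fun a => by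
      have : α a ∈ Set.range β := hβ.2 ▸ ⟨a, rfl⟩
      exact this
    have hg' : ∀ x, ∃ z, β z = α (f x) := fun x => hg (f x)
    choose g hg using hg'
    have hββ : ∀ x, β (α (f (g x))) = α (f x) := fun x => by
      rw [← hg x]
      exact ((hβ.1 _ _).1 (hf (g x))).symm
    have hβ'β : ∀ x, α (f (g (β x))) = α (f x) := fun x => by
      rw [← hεker, hβ.1, hg]
      obtain ⟨a, ha⟩ : β x ∈ Set.range α := hβ.2 ▸ ⟨x, rfl⟩
      rw [← ha, hfix]
    refine ⟨fun x => α (f (g x)), ?_, funext hβ'β, funext hββ⟩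
    rw [mem_Hcl_iff E α hα]
    refine ⟨fun x y => ?_, ?_⟩
    · rw [← hεker (g x), hβ.1 (g x), hg, hg]
      exact hεker x y
    · apply Set.Subset.antisymm
      · rintro _ ⟨x, rfl⟩
        exact ⟨β (α x), (hβ'β _).trans (hfix x)⟩
      · rintro _ ⟨x, rfl⟩
        exact ⟨f (g x), rfl⟩
end

section
/- Q(2) is a union of symmetric groups: Q(2) = ⋃_{α ∈ Q(2)} H_α where H_α = {β ∈ Q(2) : Xα = Xβ}, and for each α ∈ Q(2) the group H_α (under composition) is isomorphic to the symmetric group of all permutations of the set Xα (the range of α). -/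
universe u

theorem Q2_const {X : Type u} {E : Setoid X} {α : X → X} (h : α ∈ Q2 E) {x y : X}
    (hxy : E.r x y) : α x = α y := by
  obtain ⟨z, hz⟩ := h.2 x
  have h1 : α x ∈ α '' cls E x := ⟨x, E.refl x, rfl⟩
  have h2 : α y ∈ α '' cls E x := ⟨y, hxy, rfl⟩
  rw [hz] at h1 h2
  exact h1.trans h2.symm

theorem Hcl_intro {X : Type u} {E : Setoid X} {α β : X → X} (h : α ∈ Q2 E)
    (h1 : ∀ x y, E.r x y ↔ E.r (β x) (β y)) (h2 : ∀ x y, E.r x y → β x = β y)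
    (h3 : Set.range α = Set.range β) : β ∈ Hcl E α := by
  refine ⟨⟨⟨h1, fun x => h3 ▸ h.1.2 x⟩, fun x => ⟨β x, ?_⟩⟩, h3⟩
  ext z
  constructor
  · rintro ⟨y, hy, rfl⟩
    exact (h2 x y hy).symm
  · rintro rfl
    exact ⟨x, E.refl x, rfl⟩

theorem Q2_trans {X : Type u} {E : Setoid X} {α : X → X} (h : α ∈ Q2 E)
    (r s : Set.range α) (hrs : E.r r.1 s.1) : r = s := by
  obtain ⟨_, x, rfl⟩ := r
  obtain ⟨_, y, rfl⟩ := s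
  exact Subtype.ext (Q2_const h ((h.1.1 x y).2 hrs))

/-- The restriction of a member of the class to the range. -/
def restr {X : Type u} {E : Setoid X} {α β : X → X} (hb : β ∈ Hcl E α) :
    Set.range α → Set.range α :=
  fun r => ⟨β r.1, hb.2.symm.subset ⟨r.1, rfl⟩⟩

theorem restr_bij {X : Type u} {E : Setoid X} {α β : X → X} (h : α ∈ Q2 E)
    (hb : β ∈ Hcl E α) : Function.Bijective (restr hb) := by
  constructor
  · intro r s hrs
    have hv : β r.1 = β s.1 := congrArg Subtype.val hrs
    apply Q2_trans h
    rw [hb.1.1.1, hv]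
  · rintro ⟨y, hy⟩
    have hy' := hy
    rw [hb.2] at hy'
    obtain ⟨x, rfl⟩ := hy'
    obtain ⟨r, hr, hr'⟩ := h.1.2 x
    exact ⟨⟨r, hr'⟩, Subtype.ext (Q2_const hb.1 hr).symm⟩

theorem Hcl_comp {X : Type u} {E : Setoid X} {α β γ : X → X} (h : α ∈ Q2 E)
    (hb : β ∈ Hcl E α) (hc : γ ∈ Hcl E α) : γ ∘ β ∈ Hcl E α := by
  refine Hcl_intro h (fun x y => (hb.1.1.1 x y).trans (hc.1.1.1 _ _))
    (fun x y hxy => congrArg γ (Q2_const hb.1 hxy)) ?_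
  ext y
  constructor
  · intro hy
    obtain ⟨⟨r, hr⟩, hr'⟩ := (restr_bij h hc).2 ⟨y, hy⟩
    have hv : γ r = y := congrArg Subtype.val hr'
    rw [hb.2] at hr
    obtain ⟨x, rfl⟩ := hr
    exact ⟨x, hv⟩
  · rintro ⟨x, rfl⟩
    rw [hc.2]
    exact ⟨β x, rfl⟩

open Classical in
/-- The isomorphism onto the symmetric group. -/
noncomputable def phi {X : Type u} {E : Setoid X} {α : X → X} (h : α ∈ Q2 E)
    (β : X → X) : Equiv.Perm (Set.range α) :=
  if hb : β ∈ Hcl E α then (Equiv.ofBijective (restr hb) (restr_bij h hb))⁻¹ else 1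

theorem phi_inv_apply {X : Type u} {E : Setoid X} {α β : X → X} (h : α ∈ Q2 E)
    (hb : β ∈ Hcl E α) (r : Set.range α) : (((phi h β)⁻¹ r : Set.range α) : X) = β r.1 := by
  rw [phi, dif_pos hb, inv_inv]
  rfl

/-- `Q(2)` is the union of its `H`-classes, each of which is isomorphic (as a group
under the composition of the semigroup) to the symmetric group on the range. -/
theorem stmt16 {X : Type u} [Nonempty X] (E : Setoid X) :
    (Q2 E = ⋃ α ∈ Q2 E, Hcl E α) ∧
    ∀ α ∈ Q2 E, ∃ φ : (X → X) → Equiv.Perm ↥(Set.range α),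
      Set.BijOn φ (Hcl E α) Set.univ ∧
      ∀ β ∈ Hcl E α, ∀ γ ∈ Hcl E α, φ (γ ∘ β) = φ β * φ γ := by
  constructor
  · ext β
    simp only [Set.mem_iUnion]
    exact ⟨fun hb => ⟨β, hb, hb, rfl⟩, fun ⟨_, _, hb⟩ => hb.1⟩
  intro α h
  have hrep : ∀ x, ∃ r : Set.range α, E.r x r.1 := fun x => by
    obtain ⟨r, hr, hr'⟩ := h.1.2 x
    exact ⟨⟨r, hr'⟩, hr⟩
  refine ⟨phi h, ⟨fun _ _ => Set.mem_univ _, ?_, ?_⟩, ?_⟩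
  · intro β hb γ hc hbc
    funext x
    obtain ⟨r, hr⟩ := hrep x
    rw [Q2_const hb.1 hr, Q2_const hc.1 hr, ← phi_inv_apply h hb, ← phi_inv_apply h hc, hbc]
  · intro σ _
    choose r hr using hrep
    have hrr : ∀ x y, E.r x y → r x = r y := fun x y hxy =>
      Q2_trans h _ _ (E.trans (E.symm (hr x)) (E.trans hxy (hr y)))
    have hid : ∀ s : Set.range α, r s.1 = s := fun s =>
      Q2_trans h _ _ (E.symm (hr s.1))
    have hb : (fun x => (σ⁻¹ (r x) : X)) ∈ Hcl E α := by
      refine Hcl_intro h (fun x y => ⟨fun hxy => ?_, fun hxy => ?_⟩) (fun x y hxy => ?_) ?_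
      · simp only [hrr x y hxy]
        exact E.refl _
      · have := σ⁻¹.injective (Q2_trans h _ _ hxy)
        have h1 := hr x
        rw [this] at h1
        exact E.trans h1 (E.symm (hr y))
      · simp only [hrr x y hxy]
      · ext y
        constructor
        · intro hy
          refine ⟨(σ ⟨y, hy⟩ : X), ?_⟩
          simp [hid]
        · rintro ⟨x, rfl⟩
          exact (σ⁻¹ (r x)).2
    refine ⟨_, hb, ?_⟩
    apply inv_injective
    ext s
    rw [phi_inv_apply h hb]
    simp only [hid]
  · intro β hb γ hc
    apply inv_injective
    ext s
    rw [phi_inv_apply h (Hcl_comp h hb hc), mul_inv_rev, Equiv.Perm.mul_apply,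
      phi_inv_apply h hc, phi_inv_apply h hb]
    rfl
end

section
/- For α ∈ Q(2), α is idempotent (αα = α, i.e., α(α(x)) = α(x) for all x ∈ X) if and only if Aα ⊆ A for every E-class A (equivalently, (x, α(x)) ∈ E for every x ∈ X). -/
universe u

/-- `α ∈ Q(2)` is idempotent iff `Aα ⊆ A` for every `E`-class `A`. -/
theorem stmt17 {X : Type u} [Nonempty X] (E : Setoid X) (α : X → X)
    (hα : α ∈ Q2 E) :
    α ∘ α = α ↔ ∀ a : X, α '' cls E a ⊆ cls E a := by
  obtain ⟨⟨hT, _⟩, hQ⟩ := hα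
  constructor
  · rintro h a _ ⟨b, hb, rfl⟩
    have h1 : α (α b) = α b := congrFun h b
    have h2 : E.r b (α b) := (hT b (α b)).2 (h1.symm ▸ E.iseqv.refl _)
    exact E.iseqv.trans hb h2
  · intro h
    funext x
    have hx : x ∈ cls E x := E.iseqv.refl x
    have hax : α x ∈ cls E x := h x ⟨x, hx, rfl⟩
    obtain ⟨y, hy⟩ := hQ x
    have e1 : α x ∈ ({y} : Set X) := hy ▸ ⟨x, hx, rfl⟩
    have e2 : α (α x) ∈ ({y} : Set X) := hy ▸ ⟨α x, hax, rfl⟩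
    exact (Set.mem_singleton_iff.1 e2).trans (Set.mem_singleton_iff.1 e1).symm
end

section
/- There exist a set Z and a semigroup isomorphism between reg(T) (under composition) and the full transformation semigroup T(Z) of all maps from Z to itself (under composition) if and only if E = X × X (E is the universal relation on X). -/
universe u

/-- `reg(T)` is isomorphic to a full transformation semigroup `T(Z)` iff `E` is
the universal relation on `X`. -/
theorem stmt18 {X : Type u} [Nonempty X] (E : Setoid X) :
    (∃ (Z : Type u) (φ : (X → X) → (Z → Z)),
      Set.BijOn φ (regT E) Set.univ ∧
      ∀ α ∈ regT E, ∀ β ∈ regT E, φ (β ∘ α) = φ β ∘ φ α) ↔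
    ∀ x y : X, E.r x y := by
  classical
  constructor
  · rintro ⟨Z, φ, hb, hm⟩ a b
    by_contra hab
    have hab' : ¬ E.r b a := fun h => hab (E.symm h)
    -- a left zero of the full transformation semigroup
    obtain ⟨f, hf⟩ : ∃ f : Z → Z, ∀ g : Z → Z, f ∘ g = f := by
      rcases isEmpty_or_nonempty Z with h | ⟨⟨z⟩⟩
      · exact ⟨id, fun g => Subsingleton.elim _ _⟩
      · exact ⟨fun _ => z, fun g => rfl⟩
    obtain ⟨γ, hγ, rfl⟩ := hb.surjOn (Set.mem_univ f)
    -- the map swapping the classes of `a` and `b`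
    let α : X → X := fun x => if E.r x a then b else if E.r x b then a else x
    have refl : ∀ x, E.r x x := E.refl
    have symm : ∀ x y, E.r x y → E.r y x := fun x y h => E.symm h
    have trans : ∀ x y z, E.r x y → E.r y z → E.r x z := fun x y z h k => E.trans h k
    have hα : α ∈ regT E := by
      refine ⟨?_, ?_⟩
      · intro x y
        simp only [α]
        split_ifs <;> constructor <;> intro h <;> grind
      · intro x
        by_cases h1 : E.r x a
        · exact ⟨a, h1, b, by simp only [α]; grind⟩
        · by_cases h2 : E.r x b
          · exact ⟨b, h2, a, by simp only [α]; grind⟩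
          · exact ⟨x, refl x, x, by simp only [α]; grind⟩
    have hγα : γ ∘ α ∈ regT E := by
      refine ⟨fun x y => (hα.1 x y).trans (hγ.1 _ _), fun x => ?_⟩
      obtain ⟨_, hy, y, rfl⟩ := hγ.2 x
      obtain ⟨_, hz, z, rfl⟩ := hα.2 y
      exact ⟨γ (α z), trans _ _ _ hy ((hγ.1 _ _).1 hz), z, rfl⟩
    have heq : γ ∘ α = γ := hb.injOn hγα hγ (by rw [hm α hα γ hγ, hf])
    have h1 : γ (α a) = γ a := congrFun heq a
    have h2 : α a = b := by simp only [α]; grind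
    rw [h2] at h1
    exact hab ((hγ.1 a b).2 (h1 ▸ refl _))
  · intro h
    have hu : regT E = Set.univ := by
      ext α
      refine ⟨fun _ => trivial, fun _ => ⟨fun x y => ⟨fun _ => h _ _, fun _ => h _ _⟩, fun x => ⟨α x, h _ _, x, rfl⟩⟩⟩
    exact ⟨X, id, hu ▸ Set.bijOn_id _, fun _ _ _ _ => rfl⟩
end

section
/- Every right group can be embedded into the kernel Q(2): if S is a nonempty semigroup that is regular (for every a ∈ S there exists b ∈ S with aba = a) and left cancellative (ca = cb implies a = b), then there exist an equivalence relation E on the underlying set S and an injective semigroup homomorphism ψ from S into T_{E*}(S) whose image is contained in Q(2) = {α ∈ reg(T_{E*}(S)) : |Aα| = 1 for every E-class A}. -/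
universe u

/-- Every right group `S` embeds into the kernel `Q(2)` of `reg(T_{E*}(S))`
for a suitable equivalence relation `E` on `S`. -/
theorem stmt19 {S : Type u} [Nonempty S] [Semigroup S]
    (hreg : ∀ a : S, ∃ b : S, a * b * a = a)
    (hlc : ∀ a b c : S, c * a = c * b → a = b) :
    ∃ (E : Setoid S) (ψ : S → (S → S)),
      Function.Injective ψ ∧
      (∀ a b : S, ψ (a * b) = ψ b ∘ ψ a) ∧
      (∀ a : S, ψ a ∈ Q2 E) := by
  refine ⟨⟨fun x y => ∀ c, x * c = y * c, ⟨fun _ _ => rfl, fun h c => (h c).symm,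
    fun h k c => (h c).trans (k c)⟩⟩, fun a x => x * a, ?_, ?_, ?_⟩
  · intro a b h
    obtain ⟨c⟩ := ‹Nonempty S›
    exact hlc a b c (congrFun h c)
  · intro a b
    funext x
    exact (mul_assoc x a b).symm
  · intro a
    obtain ⟨b, hb⟩ := hreg a
    have h1 : ∀ d, b * (a * d) = d := fun d => hlc _ _ a (by
      rw [← mul_assoc, ← mul_assoc, hb])
    have h2 : ∀ d, a * (b * d) = d := fun d => hlc _ _ b (h1 (b * d))
    refine ⟨⟨fun x y => ⟨fun h c => ?_, fun h d => ?_⟩, fun x => ⟨x * b * a, fun c => ?_, x * b, rfl⟩⟩,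
      fun x => ⟨x * a, ?_⟩⟩
    · change x * a * c = y * a * c
      rw [h a]
    · have := h (b * d)
      change x * a * (b * d) = y * a * (b * d) at this
      rwa [mul_assoc, mul_assoc, h2] at this
    · rw [mul_assoc, mul_assoc, h1]
    · ext z
      constructor
      · rintro ⟨y, hy, rfl⟩
        exact (hy a).symm
      · rintro rfl
        exact ⟨x, fun _ => rfl, rfl⟩
end
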